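/- Let n ≥ 2 and n' = n/(n−1). There is a constant c depending only on n such that for every weight w with [w]_{A_{1,n'}} < ∞ and every f ∈ C_c^∞(ℝⁿ), ‖w f‖_{L^{n'}(ℝⁿ)} ≤ c · [w]_{A_{1,n'}}^{1/n'} · ‖w |∇f|‖_{L^{1}(ℝⁿ)}. -/

import Mathlib

/-!
Put `s = n/(n-1)`, `u = w^s` and `μ = u dx`. The `A_{1,s}` condition, applied to the countably many
cubes with rational corners and sides, gives for almost every `y` the growth bound
`μ(B(y,t)) ≤ 4ⁿ [w] u(y) tⁿ` for all `t > 0` (`growth`).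

For a `C¹` compactly supported `g`, integrating `∇g` along rays and averaging over directions `z` in
the unit ball `B` gives `|B| |g(x)| ≤ ∫₀^∞ t⁻ⁿ ∫_{B(x,t)} |∇g(y)| dy dt`. If `|g| ≥ 1` on `E`, then
integrating over `E` against `μ` and exchanging the integrals gives
`|B| μ(E) ≤ ∫ |∇g(y)| ∫₀^∞ t⁻ⁿ μ(E ∩ B(y,t)) dt dy`. The measure in the inner integral is at most
`min (μ(E)) (4ⁿ [w] u(y) tⁿ)`; splitting at the radius where the two bounds agree makes the inner
integral at most `2 μ(E)^{1/n} (4ⁿ [w] u(y))^{1/s}`. Dividing by `μ(E)^{1/n}` yields the weak-type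
estimate `level_bound`: `|B| μ(E)^{1/s} ≤ 2 ∫ |∇g| (4ⁿ [w])^{1/s} w`.

The strong-type estimate follows by truncation: `level_bound` is applied to
`E = {|f| ≥ 2^k}` and `g = ψ(f / 2^k)`, where `ψ` is a smooth cutoff, so that `∇g` lives on
`{2^{k-1} ≤ |f| < 2^k}` and has size at most a constant times `2^{-k} |∇f|`. These shells are
disjoint, hence the bounds for all `k ∈ ℤ` add up.
-/

open MeasureTheory ENNReal Filter Set

noncomputable section

/-- `ℝⁿ` with the Euclidean structure. -/
abbrev En (n : ℕ) := EuclideanSpace ℝ (Fin n)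

/-- Axis-parallel closed cube with corner `a` and side length `h`. -/
def cube {n : ℕ} (a : En n) (h : ℝ) : Set (En n) := {y | ∀ i, a i ≤ y i ∧ y i ≤ a i + h}

/-- Riesz potential of order `1` of a (nonnegative) function:
`I₁ g (x) = ∫ g(y) |x-y|^{-(n-1)} dy`. -/
def riesz (n : ℕ) (g : En n → ℝ) (x : En n) : ℝ≥0∞ :=
  ∫⁻ y, ENNReal.ofReal (g y) * ENNReal.ofReal (‖x - y‖ ^ (-((n : ℝ) - 1)))

/-- The quantity `(∫ g^p dμ)^{1/p}` for an `ℝ≥0∞`-valued function `g`. -/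
def lpNorm {α : Type*} [MeasurableSpace α] (p : ℝ) (g : α → ℝ≥0∞) (μ : Measure α) : ℝ≥0∞ :=
  (∫⁻ x, g x ^ p ∂μ) ^ (1 / p)

/-- Average `⨍_Q g` of an `ℝ≥0∞`-valued function over a set `Q`. -/
def avgE {n : ℕ} (g : En n → ℝ≥0∞) (Q : Set (En n)) : ℝ≥0∞ :=
  (volume Q)⁻¹ * ∫⁻ x in Q, g x

/-- The `A_{p,p*}` constant of a weight `w`; here `ps` plays the role of `p*` and
`pp` that of `p' = p/(p-1)`:
`[w]_{A_{p,p*}} = sup_Q (⨍_Q w^{p*}) (⨍_Q w^{-p'})^{p*/p'}`. -/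
def Apq (n : ℕ) (ps pp : ℝ) (w : En n → ℝ) : ℝ≥0∞ :=
  ⨆ (a : En n) (h : ℝ) (_ : 0 < h),
    avgE (fun x => ENNReal.ofReal (w x) ^ ps) (cube a h) *
      avgE (fun x => ENNReal.ofReal (w x) ^ (-pp)) (cube a h) ^ (ps / pp)

/-- The `A_{1,s}` constant of a weight `w`: the least `c` such that
`⨍_Q w^s ≤ c · essinf_Q w^s` for every cube `Q`. -/
def A1C (n : ℕ) (s : ℝ) (w : En n → ℝ) : ℝ≥0∞ :=
  sInf {c : ℝ≥0∞ | ∀ (a : En n) (h : ℝ), 0 < h →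
    avgE (fun x => ENNReal.ofReal (w x) ^ s) (cube a h) ≤
      c * essInf (fun x => ENNReal.ofReal (w x) ^ s) (volume.restrict (cube a h))}

/-- Hardy–Littlewood maximal operator over axis-parallel cubes containing `x`. -/
def maximal (n : ℕ) (g : En n → ℝ≥0∞) (x : En n) : ℝ≥0∞ :=
  ⨆ (a : En n) (h : ℝ) (_ : 0 < h) (_ : x ∈ cube a h), avgE g (cube a h)

/-- Weak `L^s` quasinorm `sup_{t>0} t · μ{|g|>t}^{1/s}` of a real function. -/
def wnormR {α : Type*} [MeasurableSpace α] (s : ℝ) (g : α → ℝ) (μ : Measure α) : ℝ≥0∞ :=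
  ⨆ (t : ℝ) (_ : 0 < t), ENNReal.ofReal t * μ {x | t < |g x|} ^ (1 / s)

/-! ### Averaging over rays -/

/-- Fundamental theorem of calculus along the ray from `x` in direction `z`, where `g` vanishes at the
far end. -/
lemma ray_bound {n : ℕ} {g : En n → ℝ} (hg : ContDiff ℝ 1 g) (hc : HasCompactSupport g)
    (x z : En n) (hz : z ≠ 0) (hz1 : ‖z‖ ≤ 1) :
    ‖g x‖ₑ ≤ ∫⁻ t in Ioi (0 : ℝ), ‖fderiv ℝ g (x + t • z)‖ₑ := by
  have hline : ContDiff ℝ 1 (fun t : ℝ => x - t • z) := by fun_prop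
  have hcd : ContDiff ℝ 1 (fun t : ℝ => g (x - t • z)) := hg.comp hline
  have hemb : Topology.IsClosedEmbedding (fun t : ℝ => x - t • z) := by
    have h1 := isClosedEmbedding_smul_left (𝕜 := ℝ) hz
    exact (Homeomorph.subLeft x).isClosedEmbedding.comp h1
  have hcs : HasCompactSupport (fun t : ℝ => g (x - t • z)) := hc.comp_isClosedEmbedding hemb
  have key := hcs.enorm_le_lintegral_Ici_deriv hcd 0
  simp only [zero_smul, sub_zero] at key
  refine key.trans ?_
  have hder : ∀ t : ℝ, ‖deriv (fun t : ℝ => g (x - t • z)) t‖ₑ ≤ ‖fderiv ℝ g (x - t • z)‖ₑ := by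
    intro t
    have h1 : HasDerivAt (fun t : ℝ => x - t • z) (-z) t := by
      simpa using ((hasDerivAt_id t).smul_const z).const_sub x
    have h2 := ((hg.differentiable one_ne_zero) (x - t • z)).hasFDerivAt.comp_hasDerivAt t h1
    have h3 : deriv (fun t : ℝ => g (x - t • z)) t = fderiv ℝ g (x - t • z) (-z) := h2.deriv
    rw [h3, ← ofReal_norm, ← ofReal_norm]
    refine ENNReal.ofReal_le_ofReal (((fderiv ℝ g (x - t • z)).le_opNorm _).trans ?_)
    rw [norm_neg]
    exact mul_le_of_le_one_right (norm_nonneg _) hz1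
  calc ∫⁻ t in Iic (0 : ℝ), ‖deriv (fun t : ℝ => g (x - t • z)) t‖ₑ
      ≤ ∫⁻ t in Iic (0 : ℝ), ‖fderiv ℝ g (x - t • z)‖ₑ := lintegral_mono hder
    _ = ∫⁻ t in Ici (0 : ℝ), ‖fderiv ℝ g (x + t • z)‖ₑ := by
        have hmp := (Measure.measurePreserving_neg (volume : Measure ℝ))
        have := hmp.setLIntegral_comp_preimage_emb (Homeomorph.neg ℝ).measurableEmbedding
          (fun t : ℝ => ‖fderiv ℝ g (x - t • z)‖ₑ) (Iic 0)
        rw [← this]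
        simp [sub_eq_add_neg]
    _ = ∫⁻ t in Ioi (0 : ℝ), ‖fderiv ℝ g (x + t • z)‖ₑ := by
        rw [Measure.restrict_congr_set Ioi_ae_eq_Ici]

lemma ball_scale {n : ℕ} {G : En n → ℝ≥0∞} (x : En n) {t : ℝ} (ht : 0 < t) :
    ∫⁻ z in Metric.ball (0 : En n) 1, G (x + t • z) =
      ENNReal.ofReal (t ^ (-(n : ℝ))) * ∫⁻ y in Metric.ball x t, G y := by
  have hmap : Measure.map (fun z : En n => x + t • z) volume =
      ENNReal.ofReal (t ^ (-(n : ℝ))) • (volume : Measure (En n)) := by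
    have h1 := Measure.map_addHaar_smul (volume : Measure (En n)) ht.ne'
    have h2 : (fun z : En n => x + t • z) = (fun y => x + y) ∘ (fun z => t • z) := rfl
    rw [h2, ← Measure.map_map (by fun_prop) (by fun_prop)]
    erw [h1]
    rw [Measure.map_smul, map_add_left_eq_self]
    congr 2
    rw [finrank_euclideanSpace_fin, abs_of_pos (by positivity), Real.rpow_neg ht.le,
      Real.rpow_natCast]
  have hemb : MeasurableEmbedding (fun z : En n => x + t • z) :=
    ((Homeomorph.smulOfNeZero t ht.ne').trans (Homeomorph.addLeft x)).measurableEmbedding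
  have hpre : (fun z : En n => x + t • z) ⁻¹' Metric.ball x t = Metric.ball 0 1 := by
    ext z
    simp [norm_smul, abs_of_pos ht, ht]
  rw [← hpre, ← smul_eq_mul, ← lintegral_smul_measure, ← Measure.restrict_smul, ← hmap,
    hemb.restrict_map, hemb.lintegral_map]

/-- Tonelli's theorem and the substitution `y = x + t z` turn the average over rays issuing from points
of `E` into an integral of `G` against the kernel `∫₀^∞ t⁻ⁿ μ(E ∩ B(y,t)) dt`. -/
lemma swap_identity {n : ℕ} (μ : Measure (En n)) [SFinite μ] {E : Set (En n)}
    (hE : MeasurableSet E) {G : En n → ℝ≥0∞} (hG : Measurable G) :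
    ∫⁻ x in E, (∫⁻ z in Metric.ball (0 : En n) 1, ∫⁻ t in Ioi (0 : ℝ), G (x + t • z)) ∂μ =
      ∫⁻ y, G y * ∫⁻ t in Ioi (0 : ℝ),
        ENNReal.ofReal (t ^ (-(n : ℝ))) * μ (E ∩ Metric.ball y t) := by
  have h1 : ∀ x : En n, (∫⁻ z in Metric.ball (0 : En n) 1, ∫⁻ t in Ioi (0 : ℝ), G (x + t • z)) =
      ∫⁻ t in Ioi (0 : ℝ), ∫⁻ y, ENNReal.ofReal (t ^ (-(n : ℝ))) *
        ((Metric.ball x t).indicator 1 y * G y) := by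
    intro x
    rw [lintegral_lintegral_swap (by fun_prop)]
    refine setLIntegral_congr_fun measurableSet_Ioi fun t ht => ?_
    rw [ball_scale x ht, ← lintegral_indicator Metric.isOpen_ball.measurableSet,
      lintegral_const_mul']
    · congr 1
      refine lintegral_congr fun y => ?_
      by_cases hy : y ∈ Metric.ball x t <;> simp [hy]
    · exact ofReal_ne_top
  have hset : MeasurableSet {p : (En n × ℝ) × En n | p.2 ∈ Metric.ball p.1.1 p.1.2} := by
    simp only [Metric.mem_ball]
    exact measurableSet_lt (by fun_prop) (by fun_prop)
  have hind : Measurable (fun p : (En n × ℝ) × En n =>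
      (Metric.ball p.1.1 p.1.2).indicator (1 : En n → ℝ≥0∞) p.2) :=
    (measurable_const (a := (1 : ℝ≥0∞))).indicator hset
  have hF : Measurable (fun p : (En n × ℝ) × En n => ENNReal.ofReal (p.1.2 ^ (-(n : ℝ))) *
        ((Metric.ball p.1.1 p.1.2).indicator 1 p.2 * G p.2)) := by
    refine Measurable.mul (by fun_prop) (hind.mul (by fun_prop))
  simp_rw [h1]
  rw [lintegral_lintegral_swap]
  swap
  · exact hF.lintegral_prod_right'.aemeasurable
  have h2 : ∀ t : ℝ, (∫⁻ x in E, (∫⁻ y, ENNReal.ofReal (t ^ (-(n : ℝ))) *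
        ((Metric.ball x t).indicator 1 y * G y)) ∂μ) =
      ∫⁻ y, G y * (ENNReal.ofReal (t ^ (-(n : ℝ))) * μ (E ∩ Metric.ball y t)) := by
    intro t
    rw [lintegral_lintegral_swap]
    swap
    · exact (hF.comp (f := fun p : En n × En n => ((p.1, t), p.2)) (by fun_prop)).aemeasurable
    refine lintegral_congr fun y => ?_
    have h3 : ∀ x : En n, ENNReal.ofReal (t ^ (-(n : ℝ))) *
        ((Metric.ball x t).indicator 1 y * G y) =
        (ENNReal.ofReal (t ^ (-(n : ℝ))) * G y) * (Metric.ball y t).indicator 1 x := by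
      intro x
      by_cases hy : y ∈ Metric.ball x t
      · have : x ∈ Metric.ball y t := by rwa [Metric.mem_ball_comm]
        simp [hy, this]
      · have : x ∉ Metric.ball y t := by rwa [Metric.mem_ball_comm]
        simp [hy, this]
    simp_rw [h3]
    rw [lintegral_const_mul _ (measurable_one.indicator Metric.isOpen_ball.measurableSet),
      lintegral_indicator_one Metric.isOpen_ball.measurableSet,
      Measure.restrict_apply Metric.isOpen_ball.measurableSet, inter_comm]
    ring
  simp_rw [h2]
  have hmeas : Measurable (fun p : ℝ × En n =>
      ENNReal.ofReal (p.1 ^ (-(n : ℝ))) * μ (E ∩ Metric.ball p.2 p.1)) := by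
    refine Measurable.mul (by fun_prop) ?_
    have hs : MeasurableSet {q : (ℝ × En n) × En n | q.2 ∈ E ∩ Metric.ball q.1.2 q.1.1} := by
      refine MeasurableSet.inter (measurable_snd hE) ?_
      exact measurableSet_lt (by fun_prop) (by fun_prop)
    exact measurable_measure_prodMk_left hs
  rw [lintegral_lintegral_swap]
  swap
  · exact ((hG.comp measurable_snd).mul hmeas).aemeasurable
  refine lintegral_congr fun y => ?_
  rw [lintegral_const_mul]
  exact hmeas.comp (f := fun t : ℝ => (t, y)) (by fun_prop)

/-- The two bounds on `F` agree at the radius `R = (m/A)^{1/n}`. Below `R` the second one contributes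
`A R`, above `R` the first one contributes `m R^{1-n}/(n-1)`, and
`A R = m R^{1-n} = m^{1/n} A^{(n-1)/n}`. -/
lemma kernel_bound {n : ℕ} (hn : 2 ≤ n) {m A : ℝ≥0∞} (hm : m ≠ ∞) (hA : A ≠ ∞)
    {F : ℝ → ℝ≥0∞} (hF1 : ∀ t, F t ≤ m) (hF2 : ∀ t, 0 < t → F t ≤ A * ENNReal.ofReal (t ^ (n : ℝ))) :
    ∫⁻ t in Ioi (0 : ℝ), ENNReal.ofReal (t ^ (-(n : ℝ))) * F t ≤
      2 * (m ^ (1 / (n : ℝ)) * A ^ (((n : ℝ) - 1) / n)) := by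
  have hn2 : (2 : ℝ) ≤ n := by exact_mod_cast hn
  have hn0 : (0 : ℝ) < n := by linarith
  by_cases hz : m = 0 ∨ A = 0
  · have : ∫⁻ t in Ioi (0 : ℝ), ENNReal.ofReal (t ^ (-(n : ℝ))) * F t = 0 := by
      rw [← nonpos_iff_eq_zero, ← lintegral_zero (μ := volume.restrict (Ioi (0 : ℝ)))]
      refine setLIntegral_mono measurable_const fun t ht => ?_
      rcases hz with hz | hz
      · have := hF1 t
        rw [hz] at this
        simp [nonpos_iff_eq_zero.mp this]
      · have := hF2 t ht
        rw [hz, zero_mul] at this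
        simp [nonpos_iff_eq_zero.mp this]
    rw [this]; exact zero_le
  push Not at hz
  obtain ⟨hm0, hA0⟩ := hz
  obtain ⟨a, ha, rfl⟩ : ∃ a : ℝ, 0 < a ∧ ENNReal.ofReal a = m :=
    ⟨m.toReal, ENNReal.toReal_pos hm0 hm, ENNReal.ofReal_toReal hm⟩
  obtain ⟨b, hb, rfl⟩ : ∃ b : ℝ, 0 < b ∧ ENNReal.ofReal b = A :=
    ⟨A.toReal, ENNReal.toReal_pos hA0 hA, ENNReal.ofReal_toReal hA⟩
  set R : ℝ := (a / b) ^ (1 / (n : ℝ)) with hR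
  have hRpos : 0 < R := by positivity
  set P : ℝ := a ^ (1 / (n : ℝ)) * b ^ (((n : ℝ) - 1) / n) with hP
  have hbR : b * R = P := by
    rw [hR, hP, Real.div_rpow ha.le hb.le, sub_div, div_self hn0.ne', Real.rpow_sub hb, Real.rpow_one]
    field_simp
  have haR : a * R ^ (1 - (n : ℝ)) = P := by
    have : R ^ (n : ℝ) = a / b := by
      rw [hR, ← Real.rpow_mul (by positivity), one_div_mul_cancel hn0.ne', Real.rpow_one]
    rw [Real.rpow_sub hRpos, Real.rpow_one, this, ← hbR]
    field_simp
  have hnear : ∫⁻ t in Ioc 0 R, ENNReal.ofReal (t ^ (-(n : ℝ))) * F t ≤ ENNReal.ofReal P := by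
    calc _ ≤ ∫⁻ t in Ioc 0 R, ENNReal.ofReal b := by
          refine setLIntegral_mono measurable_const fun t ht => ?_
          refine (mul_le_mul_right (hF2 t ht.1) _).trans ?_
          rw [mul_left_comm, ← ENNReal.ofReal_mul (Real.rpow_nonneg ht.1.le _),
            ← Real.rpow_add ht.1]
          simp
      _ = ENNReal.ofReal P := by
          rw [setLIntegral_const, Real.volume_Ioc, sub_zero, ← ENNReal.ofReal_mul hb.le, hbR]
  have hfar : ∫⁻ t in Ioi R, ENNReal.ofReal (t ^ (-(n : ℝ))) * F t ≤ ENNReal.ofReal P := by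
    calc _ ≤ ∫⁻ t in Ioi R, ENNReal.ofReal a * ENNReal.ofReal (t ^ (-(n : ℝ))) := by
          refine lintegral_mono fun t => ?_
          rw [mul_comm]
          exact mul_le_mul_left (hF1 t) _
      _ = ENNReal.ofReal a * ENNReal.ofReal (∫ t in Ioi R, t ^ (-(n : ℝ))) := by
          rw [lintegral_const_mul' _ _ ofReal_ne_top,
            ofReal_integral_eq_lintegral_ofReal (integrableOn_Ioi_rpow_of_lt (by linarith) hRpos)]
          refine (ae_restrict_iff' measurableSet_Ioi).mpr (ae_of_all _ fun t ht => ?_)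
          exact Real.rpow_nonneg (hRpos.trans ht).le _
      _ ≤ ENNReal.ofReal P := by
          rw [← ENNReal.ofReal_mul ha.le, integral_Ioi_rpow_of_lt (by linarith) hRpos]
          refine ENNReal.ofReal_le_ofReal ?_
          have e : a * (-R ^ (-(n : ℝ) + 1) / (-(n : ℝ) + 1)) = P / ((n : ℝ) - 1) := by
            rw [← haR, show -(n : ℝ) + 1 = 1 - n by ring, mul_div_assoc]
            rw [show (1 - (n : ℝ)) = -((n : ℝ) - 1) by ring, neg_div_neg_eq]
          rw [e]
          exact div_le_self (by positivity) (by linarith)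
  rw [ENNReal.ofReal_rpow_of_pos ha, ENNReal.ofReal_rpow_of_pos hb, ← ENNReal.ofReal_mul (by positivity),
    ← hP, ← Ioc_union_Ioi_eq_Ioi hRpos.le, two_mul]
  exact (lintegral_union_le _ _ _).trans (add_le_add hnear hfar)

/-! ### The weak-type estimate -/

/-- Weak-type estimate: a measure with growth `μ(B(y,t)) ≤ A(y) tⁿ` satisfies a capacitary inequality
for the sets on which `|g| ≥ 1`. -/
lemma level_bound {n : ℕ} (hn : 2 ≤ n) (μ : Measure (En n)) [SFinite μ] {A : En n → ℝ≥0∞}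
    (hA : ∀ y, A y ≠ ∞)
    (hμ : ∀ᵐ y, ∀ t : ℝ, 0 < t → μ (Metric.ball y t) ≤ A y * ENNReal.ofReal (t ^ (n : ℝ)))
    {E : Set (En n)} (hE : MeasurableSet E) (hEfin : μ E ≠ ∞) {g : En n → ℝ}
    (hg : ContDiff ℝ 1 g) (hc : HasCompactSupport g) (hgE : ∀ x ∈ E, 1 ≤ ‖g x‖ₑ) :
    volume (Metric.ball (0 : En n) 1) * μ E ^ (((n : ℝ) - 1) / n) ≤
      2 * ∫⁻ y, ‖fderiv ℝ g y‖ₑ * A y ^ (((n : ℝ) - 1) / n) := by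
  have hn2 : (2 : ℝ) ≤ n := by exact_mod_cast hn
  have hn0 : (0 : ℝ) < n := by linarith
  have hexp : 0 < ((n : ℝ) - 1) / n := div_pos (by linarith) hn0
  have hne : Nonempty (Fin n) := ⟨⟨0, by omega⟩⟩
  rcases eq_or_ne (μ E) 0 with h0 | h0
  · rw [h0, ENNReal.zero_rpow_of_pos hexp, mul_zero]; exact zero_le
  set V := volume (Metric.ball (0 : En n) 1)
  have hGm : Measurable (fun y => ‖fderiv ℝ g y‖ₑ) :=
    (hg.continuous_fderiv one_ne_zero).enorm.measurable
  have hpt : ∀ x ∈ E, V ≤ ∫⁻ z in Metric.ball (0 : En n) 1, ∫⁻ t in Ioi (0 : ℝ),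
      ‖fderiv ℝ g (x + t • z)‖ₑ := by
    intro x hx
    calc V = ∫⁻ z in Metric.ball (0 : En n) 1, 1 := by simp [V]
      _ ≤ _ := by
        refine lintegral_mono_ae ((ae_restrict_iff' Metric.isOpen_ball.measurableSet).mpr ?_)
        have hz : ∀ᵐ z : En n, z ≠ 0 := by simp [ae_iff, measure_singleton]
        filter_upwards [hz] with z hz hzb
        refine (hgE x hx).trans (ray_bound hg hc x z hz ?_)
        simpa using (Metric.mem_ball.mp hzb).le
  have hmain : V * μ E ≤ μ E ^ (1 / (n : ℝ)) *
      (2 * ∫⁻ y, ‖fderiv ℝ g y‖ₑ * A y ^ (((n : ℝ) - 1) / n)) := by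
    calc V * μ E = ∫⁻ x in E, V ∂μ := by rw [setLIntegral_const]
      _ ≤ ∫⁻ x in E, (∫⁻ z in Metric.ball (0 : En n) 1, ∫⁻ t in Ioi (0 : ℝ),
            ‖fderiv ℝ g (x + t • z)‖ₑ) ∂μ := setLIntegral_mono' hE hpt
      _ = ∫⁻ y, ‖fderiv ℝ g y‖ₑ * ∫⁻ t in Ioi (0 : ℝ),
            ENNReal.ofReal (t ^ (-(n : ℝ))) * μ (E ∩ Metric.ball y t) :=
          swap_identity μ hE hGm
      _ ≤ ∫⁻ y, (μ E ^ (1 / (n : ℝ)) * 2) *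
            (‖fderiv ℝ g y‖ₑ * A y ^ (((n : ℝ) - 1) / n)) := by
          refine lintegral_mono_ae ?_
          filter_upwards [hμ] with y hy
          refine (mul_le_mul_right (kernel_bound hn hEfin (hA y)
            (fun t => measure_mono inter_subset_left)
            (fun t ht => (measure_mono inter_subset_right).trans (hy t ht))) _).trans ?_
          apply le_of_eq; ring
      _ = _ := by
          rw [lintegral_const_mul', mul_assoc]
          exact ENNReal.mul_ne_top (ENNReal.rpow_ne_top_of_nonneg (by positivity) hEfin) (by simp)
  have hsplit : μ E = μ E ^ (1 / (n : ℝ)) * μ E ^ (((n : ℝ) - 1) / n) := by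
    rw [← ENNReal.rpow_add _ _ h0 hEfin, ← add_div, add_sub_cancel, div_self hn0.ne',
      ENNReal.rpow_one]
  have hcancel : μ E ^ (1 / (n : ℝ)) * (V * μ E ^ (((n : ℝ) - 1) / n)) ≤ μ E ^ (1 / (n : ℝ)) *
      (2 * ∫⁻ y, ‖fderiv ℝ g y‖ₑ * A y ^ (((n : ℝ) - 1) / n)) := by
    refine le_trans (le_of_eq ?_) hmain
    conv_rhs => rw [hsplit]
    ring
  refine (ENNReal.mul_le_mul_iff_right ?_ ?_).mp hcancel
  · exact (ENNReal.rpow_pos (pos_iff_ne_zero.mpr h0) hEfin).ne'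
  · exact ENNReal.rpow_ne_top_of_nonneg (by positivity) hEfin

/-- A `C¹` cutoff `ψ` with `ψ 0 = 0` and `ψ = 1` for `|s| ≥ 1`. The shell carrying `ψ'` is
half-open, so that its dyadic dilates are disjoint. -/
lemma exists_truncation : ∃ (ψ : ℝ → ℝ) (L : ℝ), 0 < L ∧ ContDiff ℝ 1 ψ ∧ ψ 0 = 0 ∧
    (∀ s, 1 ≤ |s| → ψ s = 1) ∧ (∀ s, |deriv ψ s| ≤ L) ∧
    (∀ s, deriv ψ s ≠ 0 → 1 / 2 ≤ |s| ∧ |s| < 1) := by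
  -- The argument `(4 s² - 1)/3` is `0` at `|s| = 1/2` and `1` at `|s| = 1`.
  set ψ : ℝ → ℝ := fun s => Real.smoothTransition ((4 * s ^ 2 - 1) / 3) with hψ
  have hcd : ContDiff ℝ 1 ψ :=
    (Real.smoothTransition.contDiff (n := 1)).comp (by fun_prop)
  have h1 : ∀ s, 1 ≤ |s| → ψ s = 1 := by
    intro s hs
    refine Real.smoothTransition.one_of_one_le ?_
    have : 1 ≤ s ^ 2 := by rw [← sq_abs]; nlinarith
    linarith
  have h0 : ∀ s, |s| ≤ 1 / 2 → ψ s = 0 := by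
    intro s hs
    refine Real.smoothTransition.zero_of_nonpos ?_
    have : s ^ 2 ≤ 1 / 4 := by rw [← sq_abs]; nlinarith [abs_nonneg s]
    linarith
  have hsupp : ∀ s, deriv ψ s ≠ 0 → 1 / 2 ≤ |s| ∧ |s| < 1 := by
    intro s hs
    -- Where `ψ` attains its minimum `0` or its maximum `1`, its derivative vanishes; this covers the
    -- boundary points of the shell as well.
    constructor
    · by_contra! h
      refine hs (IsLocalMin.deriv_eq_zero (Eventually.of_forall fun r => ?_))
      rw [h0 s h.le]
      exact Real.smoothTransition.nonneg _
    · by_contra! h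
      refine hs (IsLocalMax.deriv_eq_zero (Eventually.of_forall fun r => ?_))
      rw [h1 s h]
      exact Real.smoothTransition.le_one _
  obtain ⟨L, hL⟩ := (isCompact_Icc (a := (-1 : ℝ)) (b := 1)).exists_bound_of_continuousOn
    (hcd.continuous_deriv le_rfl).continuousOn
  refine ⟨ψ, max L 1, by positivity, hcd, h0 0 (by norm_num), h1, fun s => ?_, hsupp⟩
  by_cases hs : deriv ψ s = 0
  · rw [hs, abs_zero]; positivity
  · exact (hL s (abs_le.mp (hsupp s hs).2.le)).trans (le_max_left _ _)

lemma volume_cube {n : ℕ} (a : En n) {h : ℝ} (hh : 0 ≤ h) :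
    volume (cube a h) = ENNReal.ofReal (h ^ (n : ℝ)) := by
  have hpre : cube a h = (MeasurableEquiv.toLp 2 (Fin n → ℝ)).symm ⁻¹'
      (Icc (fun i => a i) (fun i => a i + h)) := by
    ext y
    simp only [cube, Set.mem_ofPred_eq, mem_preimage, mem_Icc, Pi.le_def, ← forall_and]
    rfl
  rw [hpre, (EuclideanSpace.volume_preserving_symm_measurableEquiv_toLp (Fin n)).measure_preimage_equiv,
    Real.volume_Icc_pi]
  simp [ENNReal.ofReal_pow hh]

/-! ### Growth of the weighted measure -/

/-- The infimum defining `A1C` is attained: the essential infimum over a cube is finite, so multiplication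
by it commutes with the infimum over the admissible constants. -/
lemma A1C_spec {n : ℕ} {s : ℝ} {w : En n → ℝ} (hs : 0 ≤ s) (hfin : A1C n s w < ∞)
    (a : En n) {h : ℝ} (hh : 0 < h) :
    avgE (fun x => ENNReal.ofReal (w x) ^ s) (cube a h) ≤
      A1C n s w * essInf (fun x => ENNReal.ofReal (w x) ^ s) (volume.restrict (cube a h)) := by
  set u : En n → ℝ≥0∞ := fun x => ENNReal.ofReal (w x) ^ s with hu
  set m := essInf u (volume.restrict (cube a h))
  have hm : m ≠ ∞ := by
    have hne : (ae (volume.restrict (cube a h))).NeBot := by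
      rw [ae_neBot, Ne, Measure.restrict_eq_zero, volume_cube a hh.le]
      simp only [ENNReal.ofReal_eq_zero, not_le]
      positivity
    obtain ⟨y, hy⟩ := (ae_essInf_le (f := u) (μ := volume.restrict (cube a h))).exists
    exact (hy.trans_lt (ENNReal.rpow_lt_top_of_nonneg hs ofReal_ne_top)).ne
  have hne : {c : ℝ≥0∞ | ∀ (a : En n) (h : ℝ), 0 < h →
      avgE u (cube a h) ≤ c * essInf u (volume.restrict (cube a h))}.Nonempty := by
    by_contra hemp
    rw [not_nonempty_iff_eq_empty] at hemp
    rw [A1C, hemp, sInf_empty] at hfin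
    exact lt_irrefl _ hfin
  have := hne.to_subtype
  rw [A1C, sInf_eq_iInf', ENNReal.iInf_mul (fun h => absurd h hm)]
  exact le_iInf fun c => c.2 a h hh

/-- Each ball `B(y,t)` lies in a rational cube of side less than `4t`; using only countably many cubes
leaves a single null set of exceptional `y`, independent of `t`. -/
lemma growth {n : ℕ} {s : ℝ} {w : En n → ℝ} (hs : 0 ≤ s) (hfin : A1C n s w < ∞) :
    ∀ᵐ y, ∀ t : ℝ, 0 < t →
      (volume.withDensity fun x => ENNReal.ofReal (w x) ^ s) (Metric.ball y t) ≤
        ENNReal.ofReal ((4 : ℝ) ^ (n : ℝ)) * A1C n s w * ENNReal.ofReal (w y) ^ s *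
          ENNReal.ofReal (t ^ (n : ℝ)) := by
  set u : En n → ℝ≥0∞ := fun x => ENNReal.ofReal (w x) ^ s with hu
  have hmeas : ∀ (a : En n) (h : ℝ), MeasurableSet (cube a h) := by
    intro a h
    have : cube a h = ⋂ i, {y : En n | a i ≤ y i ∧ y i ≤ a i + h} := by
      ext y; simp [cube]
    rw [this]
    refine MeasurableSet.iInter fun i => ?_
    have hi : Measurable fun y : En n => y i := by fun_prop
    exact (measurableSet_le measurable_const hi).inter (measurableSet_le hi measurable_const)
  have hae : ∀ᵐ y, ∀ (a : Fin n → ℚ) (h : ℚ), 0 < h →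
      y ∈ cube (WithLp.toLp 2 (fun i => (a i : ℝ)) : En n) (h : ℝ) →
      avgE u (cube (WithLp.toLp 2 (fun i => (a i : ℝ)) : En n) (h : ℝ)) ≤ A1C n s w * u y := by
    rw [ae_all_iff]; intro a
    rw [ae_all_iff]; intro h
    rw [eventually_imp_distrib_left]; intro hh
    have hh' : (0 : ℝ) < h := by exact_mod_cast hh
    rw [← ae_restrict_iff' (hmeas _ _)]
    filter_upwards [ae_essInf_le (f := u)] with y hy
    exact (A1C_spec hs hfin _ hh').trans (mul_le_mul_right hy _)
  filter_upwards [hae] with y hy t ht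
  choose a ha using fun i : Fin n => exists_rat_btwn (show y i - 2 * t < y i - t by linarith)
  obtain ⟨h, hh1, hh2⟩ := exists_rat_btwn (show 3 * t < 4 * t by linarith)
  have hh0 : (0 : ℝ) < h := by linarith
  set Q : Set (En n) := cube (WithLp.toLp 2 (fun i => (a i : ℝ))) (h : ℝ) with hQ
  have hball : Metric.ball y t ⊆ Q := by
    intro x hx i
    have h1 : |x i - y i| < t := by
      have := PiLp.norm_apply_le (x - y) i
      rw [Metric.mem_ball, dist_eq_norm] at hx
      simpa using this.trans_lt hx
    rw [abs_lt] at h1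
    obtain ⟨h2, h3⟩ := ha i
    constructor
    · show (a i : ℝ) ≤ x i
      linarith
    · show x i ≤ (a i : ℝ) + h
      linarith
  have hvol : volume Q = ENNReal.ofReal ((h : ℝ) ^ (n : ℝ)) := volume_cube _ hh0.le
  have hvol0 : volume Q ≠ 0 := by
    rw [hvol, Ne, ENNReal.ofReal_eq_zero, not_le]; positivity
  have hvolt : volume Q ≠ ∞ := by rw [hvol]; exact ofReal_ne_top
  have havg := hy a h (by exact_mod_cast hh0) (hball (Metric.mem_ball_self ht))
  calc (volume.withDensity u) (Metric.ball y t) ≤ (volume.withDensity u) Q := measure_mono hball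
    _ = ∫⁻ x in Q, u x := withDensity_apply _ (hmeas _ _)
    _ = volume Q * avgE u Q := by
        rw [avgE, ← mul_assoc, ENNReal.mul_inv_cancel hvol0 hvolt, one_mul]
    _ ≤ ENNReal.ofReal ((4 * t) ^ (n : ℝ)) * (A1C n s w * u y) := by
        rw [hvol]
        refine mul_le_mul' (ENNReal.ofReal_le_ofReal ?_) havg
        exact Real.rpow_le_rpow hh0.le hh2.le (by positivity)
    _ = _ := by
        rw [Real.mul_rpow (by norm_num) ht.le, ENNReal.ofReal_mul (by positivity)]
        ring

lemma tsum_rpow_le {ι : Type*} (a : ι → ℝ≥0∞) {p : ℝ} (hp : 1 ≤ p) :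
    ∑' k, a k ^ p ≤ (∑' k, a k) ^ p := by
  have h : ∀ x : ℝ≥0∞, x ^ p = x * x ^ (p - 1) := by
    intro x
    conv_rhs => rw [← ENNReal.rpow_one x, ← ENNReal.rpow_mul, one_mul]
    rw [← ENNReal.rpow_add_of_nonneg _ _ zero_le_one (by linarith), add_sub_cancel]
  rw [h (∑' k, a k), ← ENNReal.tsum_mul_right]
  refine ENNReal.tsum_le_tsum fun k => ?_
  rw [h]
  exact mul_le_mul_right (ENNReal.rpow_le_rpow (ENNReal.le_tsum k) (by linarith)) _

/-! ### Truncation and summation over dyadic levels -/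

/-- The gradient of the truncation `ψ(f / r)` lives on the shell `r/2 ≤ |f| < r`, where it is at most
`(L / r) |∇f|`. -/
lemma fderiv_truncation {n : ℕ} {ψ : ℝ → ℝ} {L : ℝ} (hψ : ContDiff ℝ 1 ψ)
    (hL : ∀ s, |deriv ψ s| ≤ L) (hsupp : ∀ s, deriv ψ s ≠ 0 → 1 / 2 ≤ |s| ∧ |s| < 1)
    {f : En n → ℝ} (hf : ContDiff ℝ 1 f) {r : ℝ} (hr : 0 < r) (y : En n) :
    ‖fderiv ℝ (fun x => ψ (f x / r)) y‖ₑ ≤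
      {x | r / 2 ≤ |f x| ∧ |f x| < r}.indicator
        (fun x => ENNReal.ofReal (L / r) * ENNReal.ofReal ‖fderiv ℝ f x‖) y := by
  have hd : HasFDerivAt (fun x => ψ (f x / r))
      (deriv ψ (f y / r) • (r⁻¹ • fderiv ℝ f y)) y := by
    have h1 : HasFDerivAt (fun x => f x / r) (r⁻¹ • fderiv ℝ f y) y := by
      have := ((hf.differentiable one_ne_zero) y).hasFDerivAt.const_smul r⁻¹
      refine this.congr_of_eventuallyEq (Eventually.of_forall fun x => ?_)
      simp [div_eq_inv_mul]
    exact ((hψ.differentiable one_ne_zero) (f y / r)).hasDerivAt.comp_hasFDerivAt y h1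
  rw [hd.fderiv]
  by_cases h0 : deriv ψ (f y / r) = 0
  · rw [h0, ← ofReal_norm, norm_smul]; simp
  have hy : y ∈ {x | r / 2 ≤ |f x| ∧ |f x| < r} := by
    have := hsupp _ h0
    rw [abs_div, abs_of_pos hr, le_div_iff₀ hr, div_lt_one hr] at this
    exact ⟨by linarith [this.1], this.2⟩
  rw [indicator_of_mem hy, ← ofReal_norm, norm_smul, norm_smul, ← mul_assoc,
    ENNReal.ofReal_mul (by positivity)]
  refine mul_le_mul_left (ENNReal.ofReal_le_ofReal ?_) _
  rw [Real.norm_eq_abs, Real.norm_eq_abs, abs_of_pos (inv_pos.mpr hr), div_eq_mul_inv]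
  exact mul_le_mul_of_nonneg_right (hL _) (inv_pos.mpr hr).le

lemma lintegral_layers {n : ℕ} {f : En n → ℝ} (hf : Continuous f) (μ : Measure (En n)) {p : ℝ}
    (hp : 0 < p) :
    ∫⁻ x, ENNReal.ofReal |f x| ^ p ∂μ ≤
      ∑' k : ℤ, ENNReal.ofReal ((2 : ℝ) ^ (k + 1)) ^ p * μ {x | (2 : ℝ) ^ k ≤ |f x|} := by
  have hE : ∀ k : ℤ, MeasurableSet {x | (2 : ℝ) ^ k ≤ |f x|} := fun k =>
    measurableSet_le measurable_const hf.abs.measurable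
  calc ∫⁻ x, ENNReal.ofReal |f x| ^ p ∂μ
      ≤ ∫⁻ x, ∑' k : ℤ, {x | (2 : ℝ) ^ k ≤ |f x|}.indicator
          (fun _ => ENNReal.ofReal ((2 : ℝ) ^ (k + 1)) ^ p) x ∂μ := by
        refine lintegral_mono fun x => ?_
        rcases eq_or_ne (f x) 0 with h0 | h0
        · simp [h0, ENNReal.zero_rpow_of_pos hp]
        obtain ⟨k, hk1, hk2⟩ := exists_mem_Ico_zpow (abs_pos.mpr h0) (one_lt_two (α := ℝ))
        refine le_trans ?_ (ENNReal.le_tsum k)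
        have hx : x ∈ {x | (2 : ℝ) ^ k ≤ |f x|} := hk1
        rw [indicator_of_mem hx]
        exact ENNReal.rpow_le_rpow (ENNReal.ofReal_le_ofReal hk2.le) hp.le
    _ = _ := by
        rw [lintegral_tsum fun k => (measurable_const.indicator (hE k)).aemeasurable]
        refine tsum_congr fun k => ?_
        rw [lintegral_indicator_const (hE k)]

lemma tsum_shells_le {n : ℕ} {f : En n → ℝ} (hf : Continuous f) (H : En n → ℝ≥0∞) :
    ∑' k : ℤ, ∫⁻ x in {x | (2 : ℝ) ^ k / 2 ≤ |f x| ∧ |f x| < (2 : ℝ) ^ k}, H x ≤ ∫⁻ x, H x := by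
  rw [← lintegral_iUnion]
  · exact setLIntegral_le_lintegral _ _
  · intro k
    exact (measurableSet_le measurable_const hf.abs.measurable).inter
      (measurableSet_lt hf.abs.measurable measurable_const)
  · have key : ∀ i j : ℤ, i < j → ∀ x, |f x| < (2 : ℝ) ^ i → ¬ (2 : ℝ) ^ j / 2 ≤ |f x| := by
      intro i j hij x hx hx'
      have h1 : (2 : ℝ) ^ i ≤ 2 ^ (j - 1) := zpow_le_zpow_right₀ one_le_two (by omega)
      rw [zpow_sub_one₀ two_ne_zero] at h1
      linarith
    intro i j hij
    refine Set.disjoint_left.mpr fun x hxi hxj => ?_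
    rcases lt_or_gt_of_ne hij with h | h
    · exact key i j h x hxi.2 hxj.1
    · exact key j i h x hxj.2 hxi.1

/-- endpoint `p = 1` weighted GNS inequality:
for `w ∈ A_{1,n'}`, `‖w f‖_{L^{n'}} ≤ c [w]_{A_{1,n'}}^{1/n'} ‖w |∇f|‖_{L^1}`, `n' = n/(n-1)`. -/
theorem statement2 (n : ℕ) (hn : 2 ≤ n) :
    ∃ c : ℝ, 0 < c ∧ ∀ w : En n → ℝ, (∀ x, 0 ≤ w x) → LocallyIntegrable w volume →
      A1C n ((n : ℝ) / (n - 1)) w < ∞ →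
      ∀ f : En n → ℝ, ContDiff ℝ (⊤ : ℕ∞) f → HasCompactSupport f →
        lpNorm ((n : ℝ) / (n - 1))
            (fun x => ENNReal.ofReal (w x) * ENNReal.ofReal |f x|) volume ≤
          ENNReal.ofReal c * A1C n ((n : ℝ) / (n - 1)) w ^ (((n : ℝ) - 1) / n) *
            ∫⁻ x, ENNReal.ofReal (w x) * ENNReal.ofReal ‖fderiv ℝ f x‖ := by
  have hn2 : (2 : ℝ) ≤ n := by exact_mod_cast hn
  have hn0 : (0 : ℝ) < n := by linarith
  have hn1 : (0 : ℝ) < (n : ℝ) - 1 := by linarith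
  have hne : Nonempty (Fin n) := ⟨⟨0, by omega⟩⟩
  obtain ⟨ψ, L, hL0, hψ, hψ0, hψ1, hψL, hψs⟩ := exists_truncation
  set p : ℝ := (n : ℝ) / (n - 1) with hp
  set q : ℝ := ((n : ℝ) - 1) / n with hq
  have hp0 : 0 < p := by positivity
  have hq0 : 0 < q := by positivity
  have hpq : p * q = 1 := by rw [hp, hq]; field_simp
  have hqp : q * p = 1 := by rw [mul_comm, hpq]
  have hp1 : 1 ≤ p := by rw [hp, le_div_iff₀ hn1]; linarith
  have hpinv : 1 / p = q := by rw [hp, hq, one_div_div]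
  set V : ℝ≥0∞ := volume (Metric.ball (0 : En n) 1) with hV
  have hV0 : V ≠ 0 := (Metric.measure_ball_pos _ _ one_pos).ne'
  have hVt : V ≠ ∞ := measure_ball_lt_top.ne
  have hV' : 0 < V.toReal := ENNReal.toReal_pos hV0 hVt
  refine ⟨V.toReal⁻¹ * (4 * L * ((4 : ℝ) ^ (n : ℝ)) ^ q), by positivity, ?_⟩
  intro w hw hwloc hA f hf hfc
  have hf1 : ContDiff ℝ 1 f := hf.of_le (by exact_mod_cast le_top)
  set C := A1C n p w with hC
  set u : En n → ℝ≥0∞ := fun x => ENNReal.ofReal (w x) ^ p with hu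
  have hut : ∀ x, u x ≠ ∞ := fun x => ENNReal.rpow_ne_top_of_nonneg hp0.le ofReal_ne_top
  have hum : AEMeasurable u := hwloc.aestronglyMeasurable.aemeasurable.ennreal_ofReal.pow_const p
  set μ : Measure (En n) := volume.withDensity u with hμ
  set K : ℝ≥0∞ := ENNReal.ofReal ((4 : ℝ) ^ (n : ℝ)) * C with hK
  have hKt : K ≠ ∞ := ENNReal.mul_ne_top ofReal_ne_top hA.ne
  have hgrow : ∀ᵐ y, ∀ t : ℝ, 0 < t →
      μ (Metric.ball y t) ≤ K * u y * ENNReal.ofReal (t ^ (n : ℝ)) := growth hp0.le hA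
  have hAt : ∀ y, K * u y ≠ ∞ := fun y => ENNReal.mul_ne_top hKt (hut y)
  set E : ℤ → Set (En n) := fun k => {x | (2 : ℝ) ^ k ≤ |f x|} with hE
  have hEm : ∀ k, MeasurableSet (E k) := fun k =>
    measurableSet_le measurable_const hf.continuous.abs.measurable
  have hEfin : ∀ k, μ (E k) ≠ ∞ := by
    intro k
    -- One point with the growth bound suffices, since `E k` is bounded.
    obtain ⟨y, hy⟩ := hgrow.exists
    obtain ⟨r, hr⟩ := hfc.isCompact.isBounded.subset_ball y
    have hsub : E k ⊆ Metric.ball y (max r 1) := by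
      intro x hx
      refine Metric.ball_subset_ball (le_max_left _ _) (hr (subset_tsupport f ?_))
      have : 0 < |f x| := lt_of_lt_of_le (by positivity) hx
      exact abs_pos.mp this
    exact ne_top_of_le_ne_top (ENNReal.mul_ne_top (hAt y) ofReal_ne_top)
      ((measure_mono hsub).trans (hy _ (by positivity)))
  set H : En n → ℝ≥0∞ := fun x => ENNReal.ofReal (w x) * ENNReal.ofReal ‖fderiv ℝ f x‖ with hH
  set S : ℤ → Set (En n) := fun k => {x | (2 : ℝ) ^ k / 2 ≤ |f x| ∧ |f x| < (2 : ℝ) ^ k} with hS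
  have hSm : ∀ k, MeasurableSet (S k) := fun k =>
    (measurableSet_le measurable_const hf.continuous.abs.measurable).inter
      (measurableSet_lt hf.continuous.abs.measurable measurable_const)
  have hAq : ∀ y, (K * u y) ^ q = K ^ q * ENNReal.ofReal (w y) := by
    intro y
    rw [ENNReal.mul_rpow_of_nonneg _ _ hq0.le, hu]
    simp only
    rw [← ENNReal.rpow_mul, hpq, ENNReal.rpow_one]
  set a : ℤ → ℝ≥0∞ := fun k => ENNReal.ofReal ((2 : ℝ) ^ (k + 1)) * μ (E k) ^ q with ha
  have hak : ∀ k, V * a k ≤ (ENNReal.ofReal (4 * L) * K ^ q) * ∫⁻ x in S k, H x := by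
    intro k
    have hr : (0 : ℝ) < 2 ^ k := by positivity
    have hgc : HasCompactSupport (fun x => ψ (f x / 2 ^ k)) :=
      hfc.comp_left (g := fun s => ψ (s / 2 ^ k)) (by simp [hψ0])
    have hgcd : ContDiff ℝ 1 (fun x => ψ (f x / 2 ^ k)) := hψ.comp (hf1.div_const _)
    have hlev := level_bound hn μ hAt hgrow (hEm k) (hEfin k) hgcd hgc (by
      intro x hx
      have h1 : 1 ≤ |f x / 2 ^ k| := by
        rw [abs_div, abs_of_pos hr, one_le_div hr]; exact hx
      rw [hψ1 _ h1]; simp)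
    have hint : ∫⁻ y, ‖fderiv ℝ (fun x => ψ (f x / 2 ^ k)) y‖ₑ * (K * u y) ^ q ≤
        (ENNReal.ofReal (L / 2 ^ k) * K ^ q) * ∫⁻ x in S k, H x := by
      calc _ ≤ ∫⁻ y, (S k).indicator
              (fun x => (ENNReal.ofReal (L / 2 ^ k) * K ^ q) * H x) y := by
            refine lintegral_mono fun y => ?_
            rw [hAq]
            refine (mul_le_mul_left (fderiv_truncation hψ hψL hψs hf1 hr y) _).trans ?_
            by_cases hy : y ∈ S k
            · rw [indicator_of_mem hy, indicator_of_mem (show y ∈ {x | _} from hy), hH]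
              apply le_of_eq; ring
            · rw [indicator_of_notMem hy, indicator_of_notMem (show y ∉ {x | _} from hy), zero_mul]
        _ = _ := by
            rw [lintegral_indicator (hSm k), lintegral_const_mul']
            exact ENNReal.mul_ne_top ofReal_ne_top (ENNReal.rpow_ne_top_of_nonneg hq0.le hKt)
    calc V * a k = ENNReal.ofReal ((2 : ℝ) ^ (k + 1)) * (V * μ (E k) ^ q) := by rw [ha]; ring
      _ ≤ ENNReal.ofReal ((2 : ℝ) ^ (k + 1)) *
            (2 * ((ENNReal.ofReal (L / 2 ^ k) * K ^ q) * ∫⁻ x in S k, H x)) :=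
          mul_le_mul_right (hlev.trans (mul_le_mul_right hint _)) _
      _ = (ENNReal.ofReal ((2 : ℝ) ^ (k + 1)) * ENNReal.ofReal 2 * ENNReal.ofReal (L / 2 ^ k)) *
            K ^ q * ∫⁻ x in S k, H x := by
          rw [ENNReal.ofReal_ofNat]; ring
      _ = _ := by
          rw [← ENNReal.ofReal_mul (by positivity), ← ENNReal.ofReal_mul (by positivity)]
          congr 3
          rw [zpow_add_one₀ two_ne_zero]
          field_simp
          norm_num
  have hLHS : lpNorm p (fun x => ENNReal.ofReal (w x) * ENNReal.ofReal |f x|) volume ≤ ∑' k, a k := by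
    have h1 : ∫⁻ x, (ENNReal.ofReal (w x) * ENNReal.ofReal |f x|) ^ p =
        ∫⁻ x, ENNReal.ofReal |f x| ^ p ∂μ := by
      rw [hμ, lintegral_withDensity_eq_lintegral_mul₀ hum]
      · refine lintegral_congr fun x => ?_
        rw [ENNReal.mul_rpow_of_nonneg _ _ hp0.le]; rfl
      · exact (hf.continuous.abs.measurable.ennreal_ofReal.pow_const p).aemeasurable
    have h2 : ∫⁻ x, ENNReal.ofReal |f x| ^ p ∂μ ≤ (∑' k, a k) ^ p := by
      refine (lintegral_layers hf.continuous μ hp0).trans (le_trans (le_of_eq ?_)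
        (tsum_rpow_le a hp1))
      refine tsum_congr fun k => ?_
      rw [ha]
      simp only
      rw [ENNReal.mul_rpow_of_nonneg _ _ hp0.le, ← ENNReal.rpow_mul, hqp, ENNReal.rpow_one]
    rw [_root_.lpNorm, h1, hpinv]
    refine (ENNReal.rpow_le_rpow h2 hq0.le).trans ?_
    rw [← ENNReal.rpow_mul, hpq, ENNReal.rpow_one]
  have hsum : V * ∑' k, a k ≤ (ENNReal.ofReal (4 * L) * K ^ q) * ∫⁻ x, H x := by
    rw [← ENNReal.tsum_mul_left]
    refine (ENNReal.tsum_le_tsum hak).trans ?_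
    rw [ENNReal.tsum_mul_left]
    exact mul_le_mul_right (tsum_shells_le hf.continuous H) _
  refine hLHS.trans ?_
  calc ∑' k, a k = V⁻¹ * (V * ∑' k, a k) := by
        rw [← mul_assoc, ENNReal.inv_mul_cancel hV0 hVt, one_mul]
    _ ≤ V⁻¹ * ((ENNReal.ofReal (4 * L) * K ^ q) * ∫⁻ x, H x) := mul_le_mul_right hsum _
    _ = _ := by
        rw [ENNReal.ofReal_mul (by positivity : (0 : ℝ) ≤ V.toReal⁻¹), ENNReal.ofReal_inv_of_pos hV',
          ENNReal.ofReal_toReal hVt, ENNReal.ofReal_mul (by positivity : (0 : ℝ) ≤ 4 * L), hK,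
          ENNReal.mul_rpow_of_nonneg _ _ hq0.le, ENNReal.ofReal_rpow_of_pos (by positivity)]
        ring
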